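/- Let α, β > −1, n ≥ 1, let u : ℝ → ℝ be differentiable, and let x_0,…,x_n be distinct points such that u(x_0),…,u(x_{n−1}) are the n distinct roots of the Jacobi polynomial G = P_n^{α,β+1}, u(x_n) = 1, u(x_0),…,u(x_n) are pairwise distinct, and u'(x_i) ≠ 0 for all i. Let L_j be the generalized Lagrange functions on these nodes and D the matrix with entries d_{kj} = L_j'(x_k). Then for all interior indices j ≠ k with 0 ≤ j, k ≤ n−1, d_{kj} = ( u'(x_k) (u(x_k) − u(x_n)) / ( (u(x_j) − u(x_n)) (u(x_k) − u(x_j)) ) ) · ( P_{n−1}^{α+1,β+2}(u(x_k)) / P_{n−1}^{α+1,β+2}(u(x_j)) ). -/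

import Mathlib

/-- Jacobi polynomials `P_n^{α,β}` defined by the three-term recurrence. -/
noncomputable def jacobiP (α β : ℝ) : ℕ → ℝ → ℝ
  | 0, _ => 1
  | 1, x => (α + β + 2) * x / 2 + (α - β) / 2
  | K + 2, x =>
      ((2 * ((K : ℝ) + 1) + α + β + 1) * (2 * ((K : ℝ) + 1) + α + β + 2) /
            (2 * (((K : ℝ) + 1) + 1) * (((K : ℝ) + 1) + α + β + 1)) * x -
          (β ^ 2 - α ^ 2) * (2 * ((K : ℝ) + 1) + α + β + 1) /
            (2 * (((K : ℝ) + 1) + 1) * (((K : ℝ) + 1) + α + β + 1) *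
              (2 * ((K : ℝ) + 1) + α + β))) *
        jacobiP α β (K + 1) x -
      (((K : ℝ) + 1) + α) * (((K : ℝ) + 1) + β) * (2 * ((K : ℝ) + 1) + α + β + 2) /
            ((((K : ℝ) + 1) + 1) * (((K : ℝ) + 1) + α + β + 1) * (2 * ((K : ℝ) + 1) + α + β)) *
        jacobiP α β K x

open Finset

/-- `glW u x t = ∏ i, (u t − u (x i))`. -/
noncomputable def glW (u : ℝ → ℝ) {n : ℕ} (x : Fin (n + 1) → ℝ) : ℝ → ℝ :=
  fun t => ∏ i, (u t - u (x i))

/-- Generalized Lagrange function `L_j(t) = κ_j ∏_{i ≠ j} (u t − u (x i))`,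
with `κ_j = u'(x_j) / w'(x_j)`. -/
noncomputable def glL (u : ℝ → ℝ) {n : ℕ} (x : Fin (n + 1) → ℝ) (j : Fin (n + 1)) : ℝ → ℝ :=
  fun t => (deriv u (x j) / deriv (glW u x) (x j)) *
    ∏ i ∈ Finset.univ.erase j, (u t - u (x i))

/-!
If a nonzero polynomial `q` of degree at most `n + 1` vanishes at the nodes `u_i = u (x_i)`, it is a
multiple of their nodal polynomial, and comparing the two gives, for `j ≠ k`,
`L_j'(x_k) = u'(x_k) / (u_k - u_j) * (q'(u_k) / q'(u_j))`. For the Radau nodes take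
`q = (X - 1) * P_n^{a,b}`: at a root `y` of `P_n^{a,b}` the product rule leaves
`q'(y) = (y - 1) * (P_n^{a,b})'(y)`, and `(P_n^{a,b})' = (n + a + b + 1) / 2 * P_{n-1}^{a+1,b+1}`.
The derivative formula is immediate from the closed hypergeometric form of `P_n^{a,b}`, which
satisfies the three-term recurrence by the contiguity relations of its coefficients.
-/

open Polynomial Lagrange

lemma ascPochhammer_succ_eval_left {R : Type*} [CommSemiring R] (k : ℕ) (z : R) :
    (ascPochhammer R (k + 1)).eval z = z * (ascPochhammer R k).eval (z + 1) := by
  simp [ascPochhammer_succ_left]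

lemma mul_ascPochhammer_eval_add_one {R : Type*} [CommSemiring R] (k : ℕ) (z : R) :
    z * (ascPochhammer R k).eval (z + 1) = (ascPochhammer R k).eval z * (z + k) := by
  rw [← ascPochhammer_succ_eval_left, ascPochhammer_succ_eval]

/-- The coefficient of `((1 - x) / 2) ^ k` in the Jacobi polynomial `P_n^{a,b}(x)`, read off the
closed form `P_n^{a,b}(x) = (a+1)_n / n! · ₂F₁(-n, n+a+b+1; a+1; (1-x)/2)`. -/
noncomputable def jacobiCoeff (a b : ℝ) (n k : ℕ) : ℝ :=
  (ascPochhammer ℝ n).eval (a + 1) / n.factorial *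
    ordinaryHypergeometricCoefficient (-n : ℝ) (n + a + b + 1) (a + 1) k

lemma jacobiCoeff_zero_right (a b : ℝ) (n : ℕ) :
    jacobiCoeff a b n 0 = (ascPochhammer ℝ n).eval (a + 1) / n.factorial := by
  simp [jacobiCoeff, ordinaryHypergeometricCoefficient]

lemma jacobiCoeff_eq_zero_of_lt (a b : ℝ) {n k : ℕ} (h : n < k) : jacobiCoeff a b n k = 0 := by
  simp [jacobiCoeff, ascPochhammer_eval_neg_coe_nat_of_lt h]

lemma jacobiCoeff_succ_zero (a b : ℝ) (n : ℕ) :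
    (n + 1) * jacobiCoeff a b (n + 1) 0 = (a + 1 + n) * jacobiCoeff a b n 0 := by
  simp only [jacobiCoeff_zero_right, ascPochhammer_succ_eval, Nat.factorial_succ]
  push_cast
  field_simp

lemma jacobiCoeff_succ_left (a b : ℝ) (n k : ℕ) :
    (n + 1 - k) * (n + a + b + 1) * jacobiCoeff a b (n + 1) k =
      (n + a + 1) * (n + a + b + 1 + k) * jacobiCoeff a b n k := by
  have hneg : -(n + 1 : ℝ) * (ascPochhammer ℝ k).eval (-n : ℝ) =
      (ascPochhammer ℝ k).eval (-(n + 1) : ℝ) * (-(n + 1) + k) := by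
    convert mul_ascPochhammer_eval_add_one k (-(n + 1) : ℝ) using 2
    ring_nf
  have hpos : (n + a + b + 1) * (ascPochhammer ℝ k).eval (n + 1 + a + b + 1) =
      (ascPochhammer ℝ k).eval (n + a + b + 1) * (n + a + b + 1 + k) := by
    convert mul_ascPochhammer_eval_add_one k (n + a + b + 1 : ℝ) using 2
    ring_nf
  simp only [jacobiCoeff, ordinaryHypergeometricCoefficient, ascPochhammer_succ_eval,
    Nat.factorial_succ]
  push_cast
  field_simp
  linear_combination (ascPochhammer ℝ n).eval (a + 1) * (n + a + 1) /
      (ascPochhammer ℝ k).eval (a + 1) *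
    ((n + 1 - k) * (ascPochhammer ℝ k).eval (-(n + 1) : ℝ) * hpos +
      (ascPochhammer ℝ k).eval (n + a + b + 1) * (n + a + b + 1 + k) * hneg)

lemma jacobiCoeff_succ_right {a : ℝ} (ha : -1 < a) (b : ℝ) (n k : ℕ) :
    (k + 1) * (a + 1 + k) * jacobiCoeff a b n (k + 1) =
      (k - n) * (n + a + b + 1 + k) * jacobiCoeff a b n k := by
  have hk : a + 1 + k ≠ 0 := by have := k.cast_nonneg (α := ℝ); linarith
  simp only [jacobiCoeff, ordinaryHypergeometricCoefficient, ascPochhammer_succ_eval,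
    Nat.factorial_succ]
  push_cast
  field_simp
  ring

lemma jacobiCoeff_succ_succ {a : ℝ} (ha : -1 < a) (b : ℝ) (n k : ℕ) :
    (k + 1) * jacobiCoeff a b (n + 1) (k + 1) =
      -(n + a + b + 2) * jacobiCoeff (a + 1) (b + 1) n k := by
  have ha' : a + 1 ≠ 0 := by linarith
  have hneg : -((n : ℝ) + 1) + 1 = -n := by ring
  have hpos : (n : ℝ) + 1 + a + b + 1 + 1 = n + (a + 1) + (b + 1) + 1 := by ring
  simp only [jacobiCoeff, ordinaryHypergeometricCoefficient, Nat.factorial_succ,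
    ascPochhammer_succ_eval_left, Nat.cast_add, Nat.cast_one, Nat.cast_mul, hneg, hpos]
  field_simp
  ring

lemma jacobiCoeff_recurrence_zero (a b : ℝ) (n : ℕ) :
    2 * (n + 2) * (n + a + b + 2) * (2 * n + a + b + 2) * jacobiCoeff a b (n + 2) 0 =
      (2 * n + a + b + 3) * ((2 * n + a + b + 2) * (2 * n + a + b + 4) + a ^ 2 - b ^ 2) *
          jacobiCoeff a b (n + 1) 0 -
        2 * (n + a + 1) * (n + b + 1) * (2 * n + a + b + 4) * jacobiCoeff a b n 0 := by
  have h₀ := jacobiCoeff_succ_zero a b n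
  have h₁ := jacobiCoeff_succ_zero a b (n + 1)
  push_cast at h₁
  linear_combination 2 * (n + a + b + 2) * (2 * n + a + b + 2) * h₁ -
    2 * (n + b + 1) * (2 * n + a + b + 4) * h₀

lemma jacobiCoeff_recurrence_succ {a : ℝ} (ha : -1 < a) (b : ℝ) (n k : ℕ) :
    2 * (n + 2) * (n + a + b + 2) * (2 * n + a + b + 2) * jacobiCoeff a b (n + 2) (k + 1) =
      (2 * n + a + b + 3) * (((2 * n + a + b + 2) * (2 * n + a + b + 4) + a ^ 2 - b ^ 2) *
          jacobiCoeff a b (n + 1) (k + 1) -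
        2 * (2 * n + a + b + 2) * (2 * n + a + b + 4) * jacobiCoeff a b (n + 1) k) -
        2 * (n + a + 1) * (n + b + 1) * (2 * n + a + b + 4) * jacobiCoeff a b n (k + 1) := by
  -- Every term is a multiple of the coefficient at `(n + 1, k)`: each `right` lowers `k + 1` to `k`
  -- and supplies the factor with which `left` then moves `n` or `n + 2` to `n + 1`.
  have : (0 : ℝ) ≤ k := k.cast_nonneg
  have left₀ := jacobiCoeff_succ_left a b n k
  have left₁ := jacobiCoeff_succ_left a b (n + 1) k
  have right₀ := jacobiCoeff_succ_right ha b n k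
  have right₁ := jacobiCoeff_succ_right ha b (n + 1) k
  have right₂ := jacobiCoeff_succ_right ha b (n + 2) k
  push_cast at left₁ right₁ right₂
  have hne : ((k : ℝ) + 1) * (a + 1 + k) ≠ 0 := mul_ne_zero (by linarith) (by linarith)
  refine mul_left_cancel₀ hne ?_
  linear_combination
    2 * (n + 2) * (2 * n + a + b + 2) * ((n + a + b + 2) * right₂ - (n + a + b + 3 + k) * left₁) -
    (2 * n + a + b + 3) * ((2 * n + a + b + 2) * (2 * n + a + b + 4) + a ^ 2 - b ^ 2) * right₁ +
    2 * (n + b + 1) * (2 * n + a + b + 4) * ((n + a + 1) * right₀ - (k - n) * left₀)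

/-- The Jacobi polynomial `P_n^{a,b}` in the shifted variable `y = (1 - x) / 2`. -/
noncomputable def shiftedJacobi (a b : ℝ) (n : ℕ) : ℝ[X] :=
  ∑ k ∈ range (n + 1), C (jacobiCoeff a b n k) * X ^ k

lemma coeff_shiftedJacobi (a b : ℝ) (n k : ℕ) :
    (shiftedJacobi a b n).coeff k = jacobiCoeff a b n k := by
  simp only [shiftedJacobi, finsetSum_coeff, coeff_C_mul_X_pow, sum_ite_eq, mem_range]
  split_ifs with hk
  · rfl
  · exact (jacobiCoeff_eq_zero_of_lt a b (by lia)).symm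

lemma shiftedJacobi_zero (a b : ℝ) : shiftedJacobi a b 0 = 1 := by
  simp [shiftedJacobi, jacobiCoeff_zero_right]

lemma shiftedJacobi_one {a : ℝ} (ha : -1 < a) (b : ℝ) :
    shiftedJacobi a b 1 = C (a + 1) - C (a + b + 2) * X := by
  have hlin : jacobiCoeff a b 1 1 = -(a + b + 2) := by
    simpa [jacobiCoeff_zero_right] using jacobiCoeff_succ_succ ha b 0 0
  rw [shiftedJacobi, sum_range_succ, sum_range_one, hlin, jacobiCoeff_zero_right, C_neg]
  simp only [ascPochhammer_one, eval_X, Nat.factorial_one, Nat.cast_one, div_one, pow_zero, pow_one,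
    mul_one, neg_mul, sub_eq_add_neg]

lemma natDegree_shiftedJacobi_le (a b : ℝ) (n : ℕ) : (shiftedJacobi a b n).natDegree ≤ n :=
  natDegree_le_iff_coeff_eq_zero.2 fun k hk => by
    rw [coeff_shiftedJacobi, jacobiCoeff_eq_zero_of_lt a b hk]

lemma derivative_shiftedJacobi_succ {a : ℝ} (ha : -1 < a) (b : ℝ) (n : ℕ) :
    derivative (shiftedJacobi a b (n + 1)) =
      C (-(n + a + b + 2)) * shiftedJacobi (a + 1) (b + 1) n := by
  ext k
  rw [coeff_derivative, coeff_C_mul, coeff_shiftedJacobi, coeff_shiftedJacobi, mul_comm,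
    jacobiCoeff_succ_succ ha]

lemma shiftedJacobi_recurrence {a : ℝ} (ha : -1 < a) (b : ℝ) (n : ℕ) :
    C (2 * (n + 2) * (n + a + b + 2) * (2 * n + a + b + 2)) * shiftedJacobi a b (n + 2) =
      C (2 * n + a + b + 3) *
          (C ((2 * n + a + b + 2) * (2 * n + a + b + 4) + a ^ 2 - b ^ 2) *
              shiftedJacobi a b (n + 1) -
            C (2 * (2 * n + a + b + 2) * (2 * n + a + b + 4)) * (X * shiftedJacobi a b (n + 1))) -
        C (2 * (n + a + 1) * (n + b + 1) * (2 * n + a + b + 4)) * shiftedJacobi a b n := by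
  ext k
  simp only [coeff_sub, coeff_C_mul, coeff_shiftedJacobi]
  cases k with
  | zero =>
    rw [coeff_X_mul_zero]
    linear_combination jacobiCoeff_recurrence_zero a b n
  | succ k =>
    rw [coeff_X_mul, coeff_shiftedJacobi]
    linear_combination jacobiCoeff_recurrence_succ ha b n k

/-- The Jacobi polynomial `P_n^{a,b}` as an element of `ℝ[X]`, defined by its closed form rather
than by the recurrence so that it can be differentiated coefficientwise. -/
noncomputable def jacobiPoly (a b : ℝ) (n : ℕ) : ℝ[X] :=
  (shiftedJacobi a b n).comp (C (1 / 2) * (1 - X))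

lemma eval_jacobiPoly (a b : ℝ) (n : ℕ) (x : ℝ) :
    (jacobiPoly a b n).eval x = (shiftedJacobi a b n).eval ((1 - x) / 2) := by
  simp [jacobiPoly, eval_comp, div_eq_inv_mul]

lemma eval_one_jacobiPoly_pos {a : ℝ} (ha : -1 < a) (b : ℝ) (n : ℕ) :
    0 < (jacobiPoly a b n).eval 1 := by
  have := ascPochhammer_pos n (a + 1) (by linarith)
  rw [eval_jacobiPoly, sub_self, zero_div, ← coeff_zero_eq_eval_zero, coeff_shiftedJacobi,
    jacobiCoeff_zero_right]
  positivity

lemma jacobiPoly_ne_zero {a : ℝ} (ha : -1 < a) (b : ℝ) (n : ℕ) : jacobiPoly a b n ≠ 0 :=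
  fun h => by simpa [h] using eval_one_jacobiPoly_pos ha b n

lemma natDegree_jacobiPoly_le (a b : ℝ) (n : ℕ) : (jacobiPoly a b n).natDegree ≤ n := by
  refine natDegree_comp_le.trans <|
    (Nat.mul_le_mul (natDegree_shiftedJacobi_le a b n) (?_ : _ ≤ 1)).trans_eq (mul_one n)
  compute_degree

lemma derivative_jacobiPoly_succ {a : ℝ} (ha : -1 < a) (b : ℝ) (n : ℕ) :
    derivative (jacobiPoly a b (n + 1)) =
      C ((n + a + b + 2) / 2) * jacobiPoly (a + 1) (b + 1) n := by
  have hinner : derivative (C (1 / 2) * (1 - X) : ℝ[X]) = C (-1 / 2) := by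
    rw [derivative_C_mul, derivative_sub, derivative_one, derivative_X, zero_sub, mul_neg, mul_one,
      ← C_neg, neg_div]
  rw [jacobiPoly, derivative_comp, derivative_shiftedJacobi_succ ha, hinner, mul_comp, C_comp,
    ← jacobiPoly, ← mul_assoc, ← C_mul]
  congr 2
  ring

lemma jacobiP_eq_eval_jacobiPoly {a b : ℝ} (ha : -1 < a) (hb : -1 < b) (x : ℝ) :
    ∀ n, jacobiP a b n x = (jacobiPoly a b n).eval x
  | 0 => by simp [jacobiP, eval_jacobiPoly, shiftedJacobi_zero]
  | 1 => by
    simp only [jacobiP, eval_jacobiPoly, shiftedJacobi_one ha, eval_sub, eval_mul, eval_C, eval_X]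
    ring
  | n + 2 => by
    have : (0 : ℝ) ≤ n := n.cast_nonneg
    have h₁ : (n : ℝ) + 1 + a + b + 1 ≠ 0 := by linarith
    have h₂ : 2 * ((n : ℝ) + 1) + a + b ≠ 0 := by linarith
    have hrec := congrArg (eval ((1 - x) / 2)) (shiftedJacobi_recurrence ha b n)
    simp only [eval_sub, eval_mul, eval_C, eval_X, ← eval_jacobiPoly] at hrec
    rw [jacobiP, jacobiP_eq_eval_jacobiPoly ha hb x (n + 1), jacobiP_eq_eval_jacobiPoly ha hb x n]
    field_simp
    linear_combination -hrec

lemma exists_eq_C_mul_nodal {K ι : Type*} [Field K] {s : Finset ι} {v : ι → K} {q : K[X]}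
    (hv : Set.InjOn v s) (hdeg : q.natDegree ≤ #s) (hroots : ∀ i ∈ s, q.eval (v i) = 0) :
    ∃ c, q = C c * nodal s v := by
  have hdvd : nodal s v ∣ q :=
    prod_dvd_of_coprime (fun i hi l hl hil => isCoprime_X_sub_C_of_isUnit_sub
      (sub_ne_zero.2 (hv.ne hi hl hil)).isUnit) fun i hi => dvd_iff_isRoot.2 (hroots i hi)
  exact ⟨_, eq_leadingCoeff_mul_of_monic_of_dvd_of_natDegree_le nodal_monic hdvd
    (hdeg.trans_eq natDegree_nodal.symm)⟩

section GeneralizedLagrange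

variable {u : ℝ → ℝ} {n : ℕ} {x : Fin (n + 1) → ℝ} {j k : Fin (n + 1)}

lemma deriv_eval_nodal_comp {ι : Type*} [DecidableEq ι] {s : Finset ι} {v : ι → ℝ} {i : ι}
    {t : ℝ} (hi : i ∈ s) (hu : DifferentiableAt ℝ u t) (ht : u t = v i) :
    deriv (fun t => (nodal s v).eval (u t)) t = (nodal (s.erase i) v).eval (v i) * deriv u t := by
  have h := ((nodal s v).hasDerivAt (u t)).comp t hu.hasDerivAt
  rw [ht, eval_nodal_derivative_eval_node_eq hi] at h
  exact h.deriv

lemma glW_eq_nodal (u : ℝ → ℝ) (x : Fin (n + 1) → ℝ) :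
    glW u x = fun t => (nodal univ (u ∘ x)).eval (u t) := by
  simp only [eval_nodal]
  rfl

lemma glL_eq_nodal (u : ℝ → ℝ) (x : Fin (n + 1) → ℝ) (j : Fin (n + 1)) :
    glL u x j = fun t => deriv u (x j) / deriv (glW u x) (x j) *
      (nodal (univ.erase j) (u ∘ x)).eval (u t) := by
  simp only [eval_nodal]
  rfl

lemma deriv_glL_of_ne (hux : Function.Injective (u ∘ x)) (hjk : j ≠ k)
    (hj : deriv u (x j) ≠ 0) (hk : DifferentiableAt ℝ u (x k)) :
    deriv (glL u x j) (x k) = deriv u (x k) / (u (x k) - u (x j)) *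
      ((nodal (univ.erase k) (u ∘ x)).eval (u (x k)) /
        (nodal (univ.erase j) (u ∘ x)).eval (u (x j))) := by
  have hsub : u (x k) - u (x j) ≠ 0 := sub_ne_zero.2 (hux.ne hjk.symm)
  have hsplit : (nodal (univ.erase k) (u ∘ x)).eval (u (x k)) =
      (u (x k) - u (x j)) * (nodal ((univ.erase j).erase k) (u ∘ x)).eval (u (x k)) := by
    rw [nodal_eq_mul_nodal_erase (mem_erase.2 ⟨hjk, mem_univ j⟩), erase_right_comm]
    simp
  rw [glL_eq_nodal, deriv_const_mul_field,
    deriv_eval_nodal_comp (mem_erase.2 ⟨hjk.symm, mem_univ k⟩) hk rfl, glW_eq_nodal,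
    deriv_eval_nodal_comp (mem_univ j) (differentiableAt_of_deriv_ne_zero hj) rfl]
  simp only [Function.comp_apply]
  rw [hsplit]
  field_simp

lemma deriv_glL_of_forall_eval_eq_zero {q : ℝ[X]} (hux : Function.Injective (u ∘ x)) (hq : q ≠ 0)
    (hdeg : q.natDegree ≤ n + 1) (hroots : ∀ i, q.eval (u (x i)) = 0) (hjk : j ≠ k)
    (hj : deriv u (x j) ≠ 0) (hk : DifferentiableAt ℝ u (x k)) :
    deriv (glL u x j) (x k) = deriv u (x k) / (u (x k) - u (x j)) *
      ((derivative q).eval (u (x k)) / (derivative q).eval (u (x j))) := by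
  obtain ⟨c, rfl⟩ := exists_eq_C_mul_nodal (s := univ) (v := u ∘ x) hux.injOn (by simpa using hdeg)
    fun i _ => hroots i
  have hc : c ≠ 0 := by rintro rfl; simp at hq
  have hderiv (i : Fin (n + 1)) : (derivative (C c * nodal univ (u ∘ x))).eval (u (x i)) =
      c * (nodal (univ.erase i) (u ∘ x)).eval (u (x i)) := by
    rw [derivative_C_mul, eval_C_mul, ← Function.comp_apply (f := u),
      eval_nodal_derivative_eval_node_eq (mem_univ i)]
  rw [deriv_glL_of_ne hux hjk hj hk, hderiv, hderiv, mul_div_mul_left _ _ hc]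

end GeneralizedLagrange

lemma eval_derivative_X_sub_one_mul_jacobiPoly {a b : ℝ} (ha : -1 < a) (hb : -1 < b) {n : ℕ}
    {y : ℝ} (hy : (jacobiPoly a b (n + 1)).eval y = 0) :
    (derivative ((X - C 1) * jacobiPoly a b (n + 1))).eval y =
      (n + a + b + 2) / 2 * ((y - 1) * jacobiP (a + 1) (b + 1) n y) := by
  rw [derivative_mul, eval_add, eval_mul, hy, mul_zero, zero_add, derivative_jacobiPoly_succ ha,
    eval_mul, eval_C_mul, ← jacobiP_eq_eval_jacobiPoly (by linarith) (by linarith), eval_sub,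
    eval_X, eval_C]
  ring

theorem gl_jacobi_radau_interior_general {a b : ℝ} (ha : -1 < a) (hb : -1 < b) {n : ℕ}
    {u : ℝ → ℝ} {x : Fin (n + 2) → ℝ} (hux : Function.Injective (u ∘ x))
    (hroots : ∀ i ≠ Fin.last (n + 1), jacobiP a b (n + 1) (u (x i)) = 0)
    (hlast : u (x (Fin.last (n + 1))) = 1) {j k : Fin (n + 2)} (hj : j ≠ Fin.last (n + 1))
    (hk : k ≠ Fin.last (n + 1)) (hjk : j ≠ k) (huj : deriv u (x j) ≠ 0)
    (huk : DifferentiableAt ℝ u (x k)) :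
    deriv (glL u x j) (x k) =
      (deriv u (x k) * (u (x k) - u (x (Fin.last (n + 1)))) /
          ((u (x j) - u (x (Fin.last (n + 1)))) * (u (x k) - u (x j)))) *
        (jacobiP (a + 1) (b + 1) n (u (x k)) / jacobiP (a + 1) (b + 1) n (u (x j))) := by
  have hq : (X - C 1) * jacobiPoly a b (n + 1) ≠ 0 :=
    mul_ne_zero (X_sub_C_ne_zero 1) (jacobiPoly_ne_zero ha b (n + 1))
  have hdeg : ((X - C 1) * jacobiPoly a b (n + 1)).natDegree ≤ n + 2 :=
    natDegree_mul_le_of_le (natDegree_X_sub_C_le 1) (natDegree_jacobiPoly_le a b (n + 1)) |>.trans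
      (by lia)
  have hG (i : Fin (n + 2)) (hi : i ≠ Fin.last (n + 1)) :
      (jacobiPoly a b (n + 1)).eval (u (x i)) = 0 := by
    rw [← jacobiP_eq_eval_jacobiPoly ha hb, hroots i hi]
  have hqroots (i : Fin (n + 2)) : ((X - C 1) * jacobiPoly a b (n + 1)).eval (u (x i)) = 0 := by
    obtain rfl | hi := eq_or_ne i (Fin.last (n + 1))
    · simp [hlast]
    · simp [hG i hi]
  have hscale : ((n : ℝ) + a + b + 2) / 2 ≠ 0 := by
    have := n.cast_nonneg (α := ℝ)
    linarith
  rw [deriv_glL_of_forall_eval_eq_zero hux hq hdeg hqroots hjk huj huk,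
    eval_derivative_X_sub_one_mul_jacobiPoly ha hb (hG k hk),
    eval_derivative_X_sub_one_mul_jacobiPoly ha hb (hG j hj), mul_div_mul_left _ _ hscale, hlast,
    mul_div_mul_comm, ← mul_assoc, div_mul_div_comm, mul_comm (u (x k) - u (x j))]

theorem gl_jacobi_radau_interior (α β : ℝ) (hα : -1 < α) (hβ : -1 < β)
    (n : ℕ) (hn : 1 ≤ n) (u : ℝ → ℝ) (x : Fin (n + 1) → ℝ)
    (hu : Differentiable ℝ u)
    (hx : Function.Injective x)
    (hux : Function.Injective (u ∘ x))
    (hu' : ∀ i, deriv u (x i) ≠ 0)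
    (hroots : ∀ i : Fin (n + 1), (i : ℕ) < n → jacobiP α (β + 1) n (u (x i)) = 0)
    (hlast : u (x (Fin.last n)) = 1)
    (j k : Fin (n + 1)) (hj : (j : ℕ) < n) (hk : (k : ℕ) < n) (hjk : j ≠ k) :
    deriv (glL u x j) (x k) =
      (deriv u (x k) * (u (x k) - u (x (Fin.last n))) /
          ((u (x j) - u (x (Fin.last n))) * (u (x k) - u (x j)))) *
        (jacobiP (α + 1) (β + 2) (n - 1) (u (x k)) /
          jacobiP (α + 1) (β + 2) (n - 1) (u (x j))) := by
  obtain ⟨n, rfl⟩ := Nat.exists_eq_add_of_le' hn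
  simpa [add_assoc, one_add_one_eq_two] using
    gl_jacobi_radau_interior_general hα (by linarith : -1 < β + 1) hux
      (fun i hi => hroots i (Fin.val_lt_last hi)) hlast (Fin.ne_last_of_lt (b := Fin.last _) hj)
      (Fin.ne_last_of_lt (b := Fin.last _) hk) hjk (hu' j) (hu (x k))
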